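/- The only solutions in positive integers (x, y) of the equation 3^x + 13 = 4^y are (x, y) = (1, 2) and (x, y) = (5, 4). -/

import Mathlib

/-!
Both sides are compared with the solution `3 ^ 5 + 13 = 4 ^ 4`. A solution with `y ≥ 5` has
`x = a + 5`, `y = b + 4` with `a, b ≥ 1`, and `3 ^ 5 * (3 ^ a - 1) = 4 ^ 4 * (4 ^ b - 1)`. Hence a
modulus prime to `6` divides `3 ^ a - 1` exactly when it divides `4 ^ b - 1`, and reading off
multiplicative orders gives
* `256 ∣ 3 ^ a - 1`, so `64 ∣ a`;
* `193 ∣ 3 ^ 16 - 1 ∣ 3 ^ a - 1`, so `193 ∣ 4 ^ b - 1`, so `48 ∣ b`;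
* `257 ∣ 4 ^ 8 - 1 ∣ 4 ^ b - 1`, so `257 ∣ 3 ^ a - 1`, so `256 ∣ a` (`3` is a primitive root
  modulo `257`).

But then `512 ∣ 3 ^ a - 1`, whereas `4 ^ 4 * (4 ^ b - 1)` is not divisible by `512`.
-/

/-- If no exponent strictly between `0` and `n` is a period of `c` modulo `m`, while `n` is one,
then `n` divides every period. -/
lemma dvd_of_pow_mod_eq_one {c m n a : ℕ} (hn : 0 < n) (h1 : c ^ n % m = 1 % m)
    (h : ∀ r < n, c ^ r % m = 1 % m → r = 0) (ha : c ^ a % m = 1 % m) : n ∣ a := by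
  refine Nat.dvd_of_mod_eq_zero (h _ (Nat.mod_lt _ hn) ?_)
  have h2 : (c ^ n) ^ (a / n) ≡ 1 [MOD m] := by
    simpa using Nat.ModEq.pow (a / n) (show c ^ n ≡ 1 [MOD m] from h1)
  have h3 : c ^ a = (c ^ n) ^ (a / n) * c ^ (a % n) := by
    rw [← pow_mul, ← pow_add, Nat.div_add_mod]
  have h4 := h2.mul_right (c ^ (a % n))
  rw [← h3, one_mul] at h4
  exact h4.symm.trans ha

lemma pow_mul_mod_eq_one {c m n : ℕ} (k : ℕ) (h : c ^ n % m = 1 % m) :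
    c ^ (n * k) % m = 1 % m := by
  have h2 : (c ^ n) ^ k ≡ 1 [MOD m] := by
    simpa using Nat.ModEq.pow k (show c ^ n ≡ 1 [MOD m] from h)
  rw [pow_mul]
  exact h2

lemma no_large_solution (a b : ℕ) (hb : 1 ≤ b) : 243 * 3 ^ a + 13 ≠ 256 * 4 ^ b := by
  intro h
  have ha : 64 ∣ a := by
    refine dvd_of_pow_mod_eq_one (c := 3) (m := 256) (by norm_num) (by norm_num) (by decide) ?_
    generalize 3 ^ a = A at *
    generalize 4 ^ b = B at *
    omega
  obtain ⟨k, rfl⟩ := ha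
  have h193 : 3 ^ (64 * k) % 193 = 1 % 193 := pow_mul_mod_eq_one k (by norm_num)
  have hb48 : 48 ∣ b := by
    refine dvd_of_pow_mod_eq_one (c := 4) (m := 193) (by norm_num) (by norm_num) (by decide) ?_
    generalize 3 ^ (64 * k) = A at *
    generalize 4 ^ b = B at *
    omega
  obtain ⟨l, rfl⟩ := hb48
  have h257 : 4 ^ (48 * l) % 257 = 1 % 257 := pow_mul_mod_eq_one l (by norm_num)
  have hk : 4 ∣ k := by
    refine dvd_of_pow_mod_eq_one (c := 3 ^ 64) (m := 257) (by norm_num) (by norm_num)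
      (by decide) ?_
    rw [← pow_mul]
    generalize 3 ^ (64 * k) = A at *
    generalize 4 ^ (48 * l) = B at *
    omega
  obtain ⟨j, rfl⟩ := hk
  have h512 : 3 ^ (64 * (4 * j)) % 512 = 1 % 512 := by
    rw [← mul_assoc]
    exact pow_mul_mod_eq_one j (by norm_num)
  have h4 : 4 ∣ 4 ^ (48 * l) := dvd_pow_self 4 (Nat.ne_of_gt hb)
  generalize 3 ^ (64 * (4 * j)) = A at *
  generalize 4 ^ (48 * l) = B at *
  omega

theorem stmt_12 : ∀ x y : ℕ, 1 ≤ x → 1 ≤ y →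
    (3 ^ x + 13 = 4 ^ y ↔ (x = 1 ∧ y = 2) ∨ (x = 5 ∧ y = 4)) := by
  intro x y hx hy
  constructor
  · intro h
    rcases Nat.lt_or_ge y 5 with hy5 | hy5
    · have hx6 : x < 6 := by
        by_contra! hx6
        have h1 : 3 ^ 6 ≤ 3 ^ x := Nat.pow_le_pow_right (by norm_num) hx6
        have h2 : 4 ^ y ≤ 4 ^ 4 := Nat.pow_le_pow_right (by norm_num) (by omega)
        omega
      interval_cases y <;> interval_cases x <;> simp_all
    · have hx5 : 5 ≤ x := by
        by_contra! hx5
        have h1 : 3 ^ x ≤ 3 ^ 4 := Nat.pow_le_pow_right (by norm_num) (by omega)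
        have h2 : 4 ^ 5 ≤ 4 ^ y := Nat.pow_le_pow_right (by norm_num) hy5
        omega
      obtain ⟨a, rfl⟩ := Nat.exists_eq_add_of_le hx5
      obtain ⟨b, rfl⟩ := Nat.exists_eq_add_of_le (show 4 ≤ y by omega)
      rw [pow_add, pow_add] at h
      exact absurd h (no_large_solution a b (by omega))
  · rintro (⟨rfl, rfl⟩ | ⟨rfl, rfl⟩) <;> norm_num
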